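/- For every u ∈ C_0^∞(ℝ³;ℝ³), ∫_{ℝ³}(Lu)·(Φu) dx = (1/2)|u(0)|² + B(u,u), where (with summation over repeated indices 1..3) B(u,u) = (α/2)∫_{ℝ³}(u_j ∂_k u_k − u_k ∂_k u_j) ∂_i Φ_ij dx + ∫_{ℝ³}(∂_k u_i ∂_k u_j + α ∂_k u_k ∂_i u_j) Φ_ij dx. -/

import Mathlib

/-!
Write `β = α/(α+2)` and `r = |x|`. Integrating by parts once in each term of `∫ (Lu)·(Φu)` gives the
second integral of `B(u,u)` together with `∫ ∂ₖuᵢ uⱼ ∂ₖΦᵢⱼ + α ∫ div u uⱼ ∂ᵢΦᵢⱼ`. No boundary term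
arises at the origin because `Φ = O(r⁻¹)` and `∂Φ = O(r⁻²)` in dimension three (`singular_ibp`).
Subtracting the first integral of `B(u,u)` leaves
`∫ ∂ₖuᵢ uⱼ ∂ₖΦᵢⱼ + (α/2) ∫ (uⱼ ∂ₖuₖ + uₖ ∂ₖuⱼ) ∂ᵢΦᵢⱼ`.

Inserting the explicit first derivatives of `Φ`, the non-radial parts cancel pointwise, by the symmetry
of `uᵢuⱼ`, and this remainder equals (`alg2`)
`-(c_α/2) ∫ (δᵢⱼ + 3β xᵢxⱼ/r²) ∂_r(uᵢuⱼ) r⁻² dx`.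
In polar coordinates the `r`-integral is `-uᵢ(0)uⱼ(0)` on each ray (`radial_integral`), and
`∫_{S²} (δᵢⱼ + 3β wᵢwⱼ) dσ = 4π(1+β) δᵢⱼ` (`sphere_integral_wgt`). Since `4π c_α (1+β) = 1`, the
remainder is `|u(0)|²/2`.
-/

open MeasureTheory Metric Real Filter

noncomputable section

/-- `ℝ³` as Euclidean space. -/
abbrev E3 : Type := EuclideanSpace ℝ (Fin 3)

/-- Partial derivative `∂ᵢ f` on `ℝ³`. -/
def pd (i : Fin 3) (f : E3 → ℝ) (x : E3) : ℝ :=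
  fderiv ℝ f x (EuclideanSpace.single i 1)

/-- Laplacian on `ℝ³`. -/
def lap (f : E3 → ℝ) (x : E3) : ℝ := ∑ i, pd i (pd i f) x

/-- Divergence of a vector field on `ℝ³`. -/
def divg (u : E3 → Fin 3 → ℝ) (x : E3) : ℝ := ∑ k, pd k (fun y => u y k) x

/-- The 3D Lamé operator `(Lu)ᵢ = -Δuᵢ - α ∂ᵢ (div u)`. -/
def lame (α : ℝ) (u : E3 → Fin 3 → ℝ) (x : E3) (i : Fin 3) : ℝ :=
  - lap (fun y => u y i) x - α * pd i (divg u) x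

/-- The constant `c_α = (α+2)/(8π(α+1))`. -/
def cA (α : ℝ) : ℝ := (α + 2) / (8 * Real.pi * (α + 1))

/-- The fundamental matrix `Φ` of the 3D Lamé system:
`Φ_ij(x) = c_α |x|⁻¹ (δ_ij + (α/(α+2)) xᵢxⱼ/|x|²)`. -/
def Phi (α : ℝ) (x : E3) (i j : Fin 3) : ℝ :=
  cA α * ‖x‖⁻¹ * ((if i = j then (1 : ℝ) else 0) + (α / (α + 2)) * (x i * x j) / ‖x‖ ^ 2)

/-- `u ∈ C₀^∞(U; ℝ³)`: smooth, compactly supported, with support inside `U`. -/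
def IsTestOn (U : Set E3) (u : E3 → Fin 3 → ℝ) : Prop :=
  ContDiff ℝ (⊤ : ℕ∞) u ∧ HasCompactSupport u ∧ tsupport u ⊆ U

/-- `∫_{ℝ³} (Lu)·(Φ(·-y) u) dx`. -/
def lameEnergy (α : ℝ) (u : E3 → Fin 3 → ℝ) (y : E3) : ℝ :=
  ∫ x : E3, ∑ i, ∑ j, lame α u x i * Phi α (x - y) i j * u x j

/-! ### Polar coordinates and moments of the sphere -/

/-- Polar coordinates: `∫ F = ∫_{S²} ∫₀^∞ r² F(rw) dr dσ(w)`. -/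
theorem polar (F : E3 → ℝ) (hF : Integrable F) :
    ∫ x, F x = ∫ w, (∫ r in Set.Ioi (0 : ℝ), r ^ 2 * F (r • (w : E3)))
      ∂(volume : Measure E3).toSphere := by
  have hmp := (volume : Measure E3).measurePreserving_homeomorphUnitSphereProd
  have hdim : Module.finrank ℝ E3 - 1 = 2 := by simp
  rw [hdim] at hmp
  set G : sphere (0 : E3) 1 × Set.Ioi (0 : ℝ) → ℝ := fun p => F ((p.2 : ℝ) • (p.1 : E3)) with hG
  have hGe : ∀ x : ({0}ᶜ : Set E3), G (homeomorphUnitSphereProd E3 x) = F x := by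
    intro x
    have hx : ‖(x : E3)‖ ≠ 0 := norm_ne_zero_iff.2 x.2
    simp [hG, smul_smul, hx]
  have hint : Integrable G ((volume : Measure E3).toSphere.prod (.volumeIoiPow 2)) := by
    rw [← hmp.integrable_comp_emb (Homeomorph.measurableEmbedding _)]
    have : (G ∘ homeomorphUnitSphereProd E3) = F ∘ Subtype.val := funext hGe
    rw [this, ← integrableOn_iff_comap_subtypeVal (by measurability)]
    exact hF.integrableOn
  calc ∫ x, F x = ∫ x : ({(0)}ᶜ : Set E3), F x.1 ∂((volume : Measure E3).comap (↑)) := by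
        rw [integral_subtype_comap (measurableSet_singleton _).compl fun x ↦ F x,
          restrict_compl_singleton]
    _ = ∫ p, G p ∂(volume : Measure E3).toSphere.prod (.volumeIoiPow 2) := by
      rw [← hmp.integral_comp (Homeomorph.measurableEmbedding _) G]
      simp only [hGe]
    _ = _ := by
      rw [integral_prod _ hint]
      refine integral_congr_ae (.of_forall fun w => ?_)
      simp only [hG, Measure.volumeIoiPow, ENNReal.ofReal]
      rw [integral_withDensity_eq_integral_smul,
        integral_subtype_comap measurableSet_Ioi
          fun a ↦ Real.toNNReal (a ^ 2) • F (a • (w : E3)),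
        setIntegral_congr_fun measurableSet_Ioi fun x hx ↦ ?_]
      · rw [NNReal.smul_def, Real.coe_toNNReal _ (pow_nonneg (le_of_lt hx) _), smul_eq_mul]
      · exact (measurable_subtype_coe.pow_const _).real_toNNReal

theorem sphere_area : (volume : Measure E3).toSphere.real Set.univ = 4 * π := by
  rw [Measure.toSphere_real_apply_univ, measureReal_def, EuclideanSpace.volume_ball_fin_three]
  simp
  rw [ENNReal.toReal_ofReal (by positivity)]
  ring

/-- The coordinate swap is a measure-preserving isometry of the ball. -/
theorem ball_moment_swap (i j : Fin 3) :
    ∫ x in ball (0 : E3) 1, x i * x i = ∫ x in ball (0 : E3) 1, x j * x j := by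
  let T : E3 ≃ₗᵢ[ℝ] E3 := LinearIsometryEquiv.piLpCongrLeft 2 ℝ ℝ (Equiv.swap i j)
  have hpre : T ⁻¹' ball (0 : E3) 1 = ball 0 1 := by
    ext x; simp
  have h := T.measurePreserving.setIntegral_preimage_emb
    T.toHomeomorph.measurableEmbedding (fun x : E3 => x i * x i) (ball 0 1)
  rw [hpre] at h
  rw [← h]
  simp [Equiv.piCongrLeft'_apply, T, LinearIsometryEquiv.piLpCongrLeft_apply]

/-- The reflection `xᵢ ↦ -xᵢ` changes the sign of the integrand. -/
theorem ball_moment_off (i j : Fin 3) (hij : i ≠ j) :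
    ∫ x in ball (0 : E3) 1, x i * x j = 0 := by
  let T : E3 ≃ₗᵢ[ℝ] E3 := LinearIsometryEquiv.piLpCongrRight 2
    (fun k => if k = i then LinearIsometryEquiv.neg ℝ else LinearIsometryEquiv.refl ℝ ℝ)
  have hpre : T ⁻¹' ball (0 : E3) 1 = ball 0 1 := by
    ext x; simp
  have h := T.measurePreserving.setIntegral_preimage_emb
    T.toHomeomorph.measurableEmbedding (fun x : E3 => x i * x j) (ball 0 1)
  rw [hpre] at h
  have h2 : ∀ x : E3, (T x) i * (T x) j = -(x i * x j) := by
    intro x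
    simp [T, LinearIsometryEquiv.piLpCongrRight_apply, hij.symm]
  simp only [h2, integral_neg] at h
  linarith

theorem integrable_ball_moment (i j : Fin 3) :
    IntegrableOn (fun x : E3 => x i * x j) (ball 0 1) := by
  have : Continuous fun x : E3 => x i * x j := by fun_prop
  exact (this.continuousOn.integrableOn_compact (isCompact_closedBall (0 : E3) 1)).mono_set
    ball_subset_closedBall

/-- The factor `1/5` is `∫₀¹ r² · r² dr`. -/
theorem ball_moment_eq (i j : Fin 3) :
    ∫ x in ball (0 : E3) 1, x i * x j =
      (1 / 5) * ∫ w, (w : E3) i * (w : E3) j ∂(volume : Measure E3).toSphere := by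
  rw [← integral_indicator measurableSet_ball, polar _
    ((integrable_indicator_iff measurableSet_ball).2 (integrable_ball_moment i j)),
    ← integral_const_mul]
  refine integral_congr_ae (.of_forall fun w => ?_)
  have hw : ‖(w : E3)‖ = 1 := by simp
  have h1 : ∀ r ∈ Set.Ioi (0 : ℝ), r ^ 2 * (ball (0 : E3) 1).indicator
      (fun x : E3 => x i * x j) (r • (w : E3)) =
      (Set.Iio (1 : ℝ)).indicator (fun r => r ^ 4 * ((w : E3) i * (w : E3) j)) r := by
    intro r hr
    have hr' : |r| = r := abs_of_pos hr
    by_cases h : r < 1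
    · simp [Set.indicator, norm_smul, hw, hr', h]; ring
    · simp [Set.indicator, norm_smul, hw, hr', h]
  simp only
  rw [setIntegral_congr_fun measurableSet_Ioi h1, setIntegral_indicator measurableSet_Iio,
    integral_mul_const, Set.Ioi_inter_Iio, ← integral_Ioc_eq_integral_Ioo,
    ← intervalIntegral.integral_of_le zero_le_one]
  norm_num

/-- Second moments of the unit sphere: by symmetry `∫ wᵢ²` is the same for all `i`, and the three
values add up to the area `4π`. -/
theorem sphere_moment (i j : Fin 3) :
    ∫ w, (w : E3) i * (w : E3) j ∂(volume : Measure E3).toSphere =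
      if i = j then 4 * π / 3 else 0 := by
  have hint : ∀ k : Fin 3, Integrable (fun w : sphere (0 : E3) 1 => (w : E3) k * (w : E3) k)
      (volume : Measure E3).toSphere := by
    intro k
    have : Continuous fun w : sphere (0 : E3) 1 => (w : E3) k * (w : E3) k := by fun_prop
    exact this.integrable_of_hasCompactSupport (HasCompactSupport.of_compactSpace _)
  split_ifs with h
  · subst h
    have hsum : ∑ k, ∫ w, (w : E3) k * (w : E3) k ∂(volume : Measure E3).toSphere = 4 * π := by
      rw [← integral_finsetSum _ (fun k _ => hint k), ← sphere_area]
      have : ∀ w : sphere (0 : E3) 1, ∑ k, (w : E3) k * (w : E3) k = 1 := by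
        intro w
        have hw : ‖(w : E3)‖ = 1 := by simp
        have := EuclideanSpace.real_norm_sq_eq (w : E3)
        rw [hw] at this
        simp only [← pow_two]; linarith
      simp [this]
    have heq : ∀ k, ∫ w, (w : E3) k * (w : E3) k ∂(volume : Measure E3).toSphere =
        ∫ w, (w : E3) i * (w : E3) i ∂(volume : Measure E3).toSphere := by
      intro k
      have := ball_moment_swap k i
      rw [ball_moment_eq, ball_moment_eq] at this
      linarith
    simp only [heq, Finset.sum_const, Finset.card_univ, Fintype.card_fin] at hsum
    simp at hsum
    linarith
  · have := ball_moment_off i j h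
    rw [ball_moment_eq] at this
    linarith

/-! ### Local integrability -/

/-- A singularity of order at most `|x|⁻²` is locally integrable in dimension three. -/
theorem locallyIntegrable_of_bound {f : E3 → ℝ} {C : ℝ} (n : ℕ) (hn : n ≤ 2) (hf : Measurable f)
    (hb : ∀ x ≠ 0, |f x| ≤ C * (‖x‖⁻¹) ^ n) : LocallyIntegrable f := by
  have hball : ∀ R : ℝ, IntegrableOn f (ball (0 : E3) R) := by
    intro R
    have h1 : IntegrableOn (fun x : E3 => C * (‖x‖⁻¹) ^ n) (ball (0 : E3) R) := by
      rw [integrableOn_fun_norm_addHaar volume (f := fun r => C * (r⁻¹) ^ n)]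
      have hc : IntegrableOn (fun r : ℝ => C * r ^ (2 - n)) (Set.Ioo 0 R) := by
        have : Continuous fun r : ℝ => C * r ^ (2 - n) := by fun_prop
        exact (this.continuousOn.integrableOn_compact isCompact_Icc).mono_set
          Set.Ioo_subset_Icc_self
      refine hc.congr_fun (fun r hr => ?_) measurableSet_Ioo
      have hr0 : r ≠ 0 := hr.1.ne'
      have : r ^ 2 = r ^ (2 - n) * r ^ n := by rw [← pow_add]; congr 1; omega
      simp only [finrank_euclideanSpace, Fintype.card_fin, smul_eq_mul]
      norm_num [this]
      field_simp
    refine h1.mono' hf.aestronglyMeasurable ?_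
    filter_upwards [ae_restrict_of_ae (Measure.ae_ne volume (0 : E3))] with x hx
    exact hb x hx
  rw [locallyIntegrable_iff]
  intro K hK
  obtain ⟨R, hR⟩ := hK.isBounded.subset_ball (0 : E3)
  exact (hball R).mono_set hR

/-! ### Scalar test functions -/

/-- `C₀^∞` scalar functions on `ℝ³`. -/
def Tst (f : E3 → ℝ) : Prop := ContDiff ℝ (⊤ : ℕ∞) f ∧ HasCompactSupport f

theorem Tst.differentiable {f : E3 → ℝ} (hf : Tst f) : Differentiable ℝ f :=
  hf.1.differentiable (by simp)

theorem Tst.mul {f g : E3 → ℝ} (hf : Tst f) (hg : Tst g) : Tst (fun x => f x * g x) :=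
  ⟨hf.1.mul hg.1, hf.2.mul_right⟩

theorem Tst.pd {f : E3 → ℝ} (hf : Tst f) (k : Fin 3) : Tst (pd k f) :=
  ⟨(hf.1.fderiv_right (m := (⊤ : ℕ∞)) (by simp)).clm_apply contDiff_const,
    hf.2.fderiv_apply (𝕜 := ℝ) _⟩

theorem Tst.sum {f : Fin 3 → E3 → ℝ} (hf : ∀ k, Tst (f k)) : Tst (fun x => ∑ k, f k x) := by
  simp only [Fin.sum_univ_three]
  exact ⟨((hf 0).1.add (hf 1).1).add (hf 2).1, ((hf 0).2.add (hf 1).2).add (hf 2).2⟩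

theorem Tst.integrable_mul {f g : E3 → ℝ} (hf : Tst f) (hg : LocallyIntegrable g) :
    Integrable (fun x => f x * g x) :=
  hg.integrable_smul_left_of_hasCompactSupport hf.1.continuous hf.2

theorem pd_mul {f g : E3 → ℝ} {x : E3} (k : Fin 3) (hf : DifferentiableAt ℝ f x)
    (hg : DifferentiableAt ℝ g x) :
    pd k (fun y => f y * g y) x = pd k f x * g x + f x * pd k g x := by
  simp only [pd]
  rw [fderiv_fun_mul hf hg]
  simp [mul_comm, add_comm]

theorem measurable_pd (k : Fin 3) (f : E3 → ℝ) : Measurable (pd k f) :=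
  measurable_fderiv_apply_const ℝ f _

/-! ### Integration by parts across the singularity -/

/-- The regularising factor `(r²/(r²+ε))²`, which vanishes to fourth order at the origin. -/
def reg (ε : ℝ) (x : E3) : ℝ := (‖x‖ ^ 2 / (‖x‖ ^ 2 + ε)) ^ 2

theorem pd_norm_sq (k : Fin 3) (x : E3) : pd k (fun y => ‖y‖ ^ 2) x = 2 * x k := by
  simp only [pd]
  rw [(hasStrictFDerivAt_norm_sq x).hasFDerivAt.fderiv]
  simp [EuclideanSpace.inner_single_right]

theorem hasFDerivAt_reg {ε : ℝ} (hε : 0 < ε) (x : E3) :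
    HasFDerivAt (reg ε) ((2 * (‖x‖ ^ 2 / (‖x‖ ^ 2 + ε)) * (ε / (‖x‖ ^ 2 + ε) ^ 2)) •
      fderiv ℝ (fun y : E3 => ‖y‖ ^ 2) x) x := by
  have h1 : HasFDerivAt (fun y : E3 => ‖y‖ ^ 2) (fderiv ℝ (fun y : E3 => ‖y‖ ^ 2) x) x :=
    (hasStrictFDerivAt_norm_sq x).hasFDerivAt.differentiableAt.hasFDerivAt
  have hne : ‖x‖ ^ 2 + ε ≠ 0 := by positivity
  have h2 : HasDerivAt (fun s : ℝ => (s / (s + ε)) ^ 2)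
      (2 * (‖x‖ ^ 2 / (‖x‖ ^ 2 + ε)) * (ε / (‖x‖ ^ 2 + ε) ^ 2)) (‖x‖ ^ 2) := by
    have := (((hasDerivAt_id (‖x‖ ^ 2)).div ((hasDerivAt_id (‖x‖ ^ 2)).add_const ε) hne).pow 2)
    convert! this using 1
    simp
  exact h2.comp_hasFDerivAt x h1

theorem pd_reg {ε : ℝ} (hε : 0 < ε) (k : Fin 3) (x : E3) :
    pd k (reg ε) x = 2 * (‖x‖ ^ 2 / (‖x‖ ^ 2 + ε)) * (ε / (‖x‖ ^ 2 + ε) ^ 2) * (2 * x k) := by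
  rw [← pd_norm_sq k x]
  simp only [pd]
  rw [(hasFDerivAt_reg hε x).fderiv]
  simp

theorem abs_coord_le (x : E3) (k : Fin 3) : |x k| ≤ ‖x‖ := PiLp.norm_apply_le x k

theorem ratio_le_one {ε : ℝ} (hε : 0 < ε) (x : E3) :
    0 ≤ ‖x‖ ^ 2 / (‖x‖ ^ 2 + ε) ∧ ‖x‖ ^ 2 / (‖x‖ ^ 2 + ε) ≤ 1 :=
  ⟨by positivity, (div_le_one (by positivity)).2 (by linarith)⟩

theorem reg_bounds {ε : ℝ} (hε : 0 < ε) (x : E3) : 0 ≤ reg ε x ∧ reg ε x ≤ 1 :=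
  ⟨sq_nonneg _, pow_le_one₀ (ratio_le_one hε x).1 (ratio_le_one hε x).2⟩

theorem abs_pd_reg_le {ε : ℝ} (hε : 0 < ε) (k : Fin 3) {x : E3} (hx : x ≠ 0) :
    |pd k (reg ε) x| ≤ 4 * ‖x‖⁻¹ := by
  have hr : 0 < ‖x‖ := norm_pos_iff.2 hx
  rw [pd_reg hε, abs_mul, abs_mul, abs_mul, abs_mul, abs_of_nonneg (ratio_le_one hε x).1,
    abs_of_nonneg (by positivity : 0 ≤ ε / (‖x‖ ^ 2 + ε) ^ 2)]
  have h1 := abs_coord_le x k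
  have h2 : ε / (‖x‖ ^ 2 + ε) ^ 2 ≤ 1 / ‖x‖ ^ 2 := by
    rw [div_le_div_iff₀ (by positivity) (by positivity)]
    nlinarith [sq_nonneg (‖x‖ ^ 2), sq_nonneg ε, mul_pos hε (pow_pos hr 2)]
  norm_num
  calc 2 * (‖x‖ ^ 2 / (‖x‖ ^ 2 + ε)) * (ε / (‖x‖ ^ 2 + ε) ^ 2) * (2 * |x k|)
      ≤ 2 * 1 * (1 / ‖x‖ ^ 2) * (2 * ‖x‖) := by
        gcongr
        exact (ratio_le_one hε x).2
    _ = 4 * ‖x‖⁻¹ := by field_simp; norm_num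

/-- If `f = O(|x|⁻¹)` is differentiable off the origin, then `f · reg ε = O(|x|³)` near the origin,
so the product is differentiable everywhere. -/
theorem differentiable_mul_reg {f : E3 → ℝ} {C ε : ℝ} (hε : 0 < ε)
    (hd : ∀ x ≠ 0, DifferentiableAt ℝ f x) (hb : ∀ x ≠ 0, |f x| ≤ C * ‖x‖⁻¹) :
    Differentiable ℝ (fun x => f x * reg ε x) := by
  intro x
  by_cases hx : x = 0
  · subst hx
    have hC : ∀ y : E3, |f y * reg ε y| ≤ |C| / ε ^ 2 * ‖y‖ ^ 3 := by
      intro y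
      by_cases hy : y = 0
      · subst hy; simp [reg]
      have hr : 0 < ‖y‖ := norm_pos_iff.2 hy
      rw [abs_mul, abs_of_nonneg (reg_bounds hε y).1]
      have h1 : reg ε y ≤ (‖y‖ ^ 2 / ε) ^ 2 := by
        unfold reg; gcongr; nlinarith [pow_pos hr 2]
      calc |f y| * reg ε y ≤ (|C| * ‖y‖⁻¹) * (‖y‖ ^ 2 / ε) ^ 2 := by
            gcongr
            · exact (reg_bounds hε y).1
            · exact (hb y hy).trans (by gcongr; exact le_abs_self C)
        _ = |C| / ε ^ 2 * ‖y‖ ^ 3 := by field_simp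
    have : HasFDerivAt (fun x => f x * reg ε x) (0 : E3 →L[ℝ] ℝ) 0 := by
      rw [hasFDerivAt_iff_isLittleO_nhds_zero]
      have h0 : reg ε 0 = 0 := by simp [reg]
      simp only [zero_add, h0, mul_zero, sub_zero, zero_apply]
      have hO : (fun h : E3 => f h * reg ε h) =O[nhds 0] fun h => ‖h‖ ^ 3 :=
        Asymptotics.IsBigO.of_bound (|C| / ε ^ 2) (.of_forall fun y => by
          simpa using hC y)
      exact hO.trans_isLittleO (Asymptotics.isLittleO_norm_pow_id (by norm_num))
    exact this.differentiableAt
  · exact (hd x hx).mul (hasFDerivAt_reg hε x).differentiableAt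

theorem tendsto_reg {x : E3} (hx : x ≠ 0) :
    Tendsto (fun n : ℕ => reg (1 / ((n : ℝ) + 1)) x) atTop (nhds 1) := by
  have hr : ‖x‖ ^ 2 ≠ 0 := by simpa using hx
  have h := tendsto_one_div_add_atTop_nhds_zero_nat (𝕜 := ℝ)
  have : Tendsto (fun n : ℕ => (‖x‖ ^ 2 / (‖x‖ ^ 2 + 1 / ((n : ℝ) + 1))) ^ 2) atTop
      (nhds ((‖x‖ ^ 2 / (‖x‖ ^ 2 + 0)) ^ 2)) :=
    ((tendsto_const_nhds.div (tendsto_const_nhds.add h) (by simpa using hr))).pow 2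
  simpa [reg, hr, hx] using this

theorem tendsto_pd_reg (k : Fin 3) {x : E3} (hx : x ≠ 0) :
    Tendsto (fun n : ℕ => pd k (reg (1 / ((n : ℝ) + 1))) x) atTop (nhds 0) := by
  have hr : ‖x‖ ^ 2 ≠ 0 := by simpa using hx
  have h := tendsto_one_div_add_atTop_nhds_zero_nat (𝕜 := ℝ)
  have hden := (tendsto_const_nhds (x := ‖x‖ ^ 2)).add h
  have hne : ‖x‖ ^ 2 + 0 ≠ 0 := by simpa using hr
  have := ((((tendsto_const_nhds (x := ‖x‖ ^ 2)).div hden hne).const_mul 2).mul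
    (h.div (hden.pow 2) (pow_ne_zero 2 hne))).mul_const (2 * x k)
  simp only [zero_div, mul_zero, zero_mul] at this
  refine this.congr fun n => ?_
  rw [pd_reg (by positivity)]
  rfl

/-- Integration by parts against a function with an `|x|⁻¹` singularity at the origin and a
derivative of size `|x|⁻²`: no boundary term appears. It follows from the smooth case for
`f · reg ε` by dominated convergence as `ε → 0`, because `|∂ₖ(reg ε)| ≤ 4|x|⁻¹` uniformly in `ε`. -/
theorem singular_ibp {f φ : E3 → ℝ} {C : ℝ} (k : Fin 3) (hφ : Tst φ)
    (hd : ∀ x ≠ 0, DifferentiableAt ℝ f x)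
    (hb : ∀ x ≠ 0, |f x| ≤ C * ‖x‖⁻¹) (hb' : ∀ x ≠ 0, |pd k f x| ≤ C * (‖x‖⁻¹) ^ 2) :
    ∫ x, (pd k φ x * f x + φ x * pd k f x) = 0 := by
  set e : ℕ → ℝ := fun n => 1 / ((n : ℝ) + 1) with he
  have hepos : ∀ n, 0 < e n := fun n => by simp only [he]; positivity
  set g : ℕ → E3 → ℝ := fun n x => f x * reg (e n) x with hg
  have hgd : ∀ n, Differentiable ℝ (g n) := fun n => differentiable_mul_reg (hepos n) hd hb
  have hC : 0 ≤ C := by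
    have := hb (EuclideanSpace.single 0 1) (by simp)
    simp at this
    exact (abs_nonneg _).trans this
  have hpg : ∀ n x, x ≠ 0 → pd k (g n) x = pd k f x * reg (e n) x + f x * pd k (reg (e n)) x :=
    fun n x hx => pd_mul k (hd x hx) (hasFDerivAt_reg (hepos n) x).differentiableAt
  have hgb : ∀ n x, x ≠ 0 → |g n x| ≤ C * (‖x‖⁻¹) ^ 1 := by
    intro n x hx
    simp only [hg, abs_mul, abs_of_nonneg (reg_bounds (hepos n) x).1, pow_one]
    calc |f x| * reg (e n) x ≤ |f x| * 1 := by gcongr; exact (reg_bounds (hepos n) x).2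
      _ ≤ _ := by simpa using hb x hx
  have hgb' : ∀ n x, x ≠ 0 → |pd k (g n) x| ≤ (5 * C) * (‖x‖⁻¹) ^ 2 := by
    intro n x hx
    rw [hpg n x hx]
    refine (abs_add_le _ _).trans ?_
    simp only [abs_mul, abs_of_nonneg (reg_bounds (hepos n) x).1]
    have h1 : |pd k f x| * reg (e n) x ≤ (C * (‖x‖⁻¹) ^ 2) * 1 := by
      gcongr
      · exact (reg_bounds (hepos n) x).1
      · exact hb' x hx
      · exact (reg_bounds (hepos n) x).2
    have h2 : |f x| * |pd k (reg (e n)) x| ≤ (C * ‖x‖⁻¹) * (4 * ‖x‖⁻¹) := by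
      gcongr
      · exact hb x hx
      · exact abs_pd_reg_le (hepos n) k hx
    nlinarith
  have hgl : ∀ n, LocallyIntegrable (g n) := fun n =>
    locallyIntegrable_of_bound 1 (by norm_num) (hgd n).continuous.measurable (hgb n)
  have hgl' : ∀ n, LocallyIntegrable (pd k (g n)) := fun n =>
    locallyIntegrable_of_bound 2 le_rfl (measurable_pd k _) (hgb' n)
  have hzero : ∀ n, ∫ x, (pd k φ x * g n x + φ x * pd k (g n) x) = 0 := by
    intro n
    rw [integral_add ((hφ.pd k).integrable_mul (hgl n)) (hφ.integrable_mul (hgl' n))]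
    have := integral_mul_fderiv_eq_neg_fderiv_mul_of_integrable (μ := (volume : Measure E3))
      (f := φ) (g := g n) (v := EuclideanSpace.single k 1)
      ((hφ.pd k).integrable_mul (hgl n)) (hφ.integrable_mul (hgl' n))
      (hφ.integrable_mul (hgl n)) (fun x _ => hφ.differentiable x) (fun x _ => hgd n x)
    simp only [pd] at this ⊢
    rw [this]; ring
  have hlim : Tendsto (fun n => ∫ x, (pd k φ x * g n x + φ x * pd k (g n) x)) atTop
      (nhds (∫ x, (pd k φ x * f x + φ x * pd k f x))) := by
    refine tendsto_integral_of_dominated_convergence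
      (fun x => |pd k φ x * (C * (‖x‖⁻¹) ^ 1)| + |φ x * ((5 * C) * (‖x‖⁻¹) ^ 2)|) ?_ ?_ ?_ ?_
    · intro n
      exact (((hφ.pd k).integrable_mul (hgl n)).add
        (hφ.integrable_mul (hgl' n))).aestronglyMeasurable
    · have hl : ∀ (c : ℝ) (m : ℕ), 0 ≤ c → m ≤ 2 →
          LocallyIntegrable (fun x : E3 => c * (‖x‖⁻¹) ^ m) := fun c m hc hm' =>
        locallyIntegrable_of_bound (C := c) m hm' (by fun_prop)
          (fun x _ => (abs_of_nonneg (by positivity)).le)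
      exact ((hφ.pd k).integrable_mul (hl C 1 hC (by norm_num))).abs.add
        (hφ.integrable_mul (hl (5 * C) 2 (by positivity) le_rfl)).abs
    · intro n
      filter_upwards [Measure.ae_ne volume (0 : E3)] with x hx
      refine (norm_add_le _ _).trans ?_
      simp only [Real.norm_eq_abs, abs_mul (pd k φ x), abs_mul (φ x)]
      exact add_le_add
        (mul_le_mul_of_nonneg_left ((hgb n x hx).trans (le_abs_self _)) (abs_nonneg _))
        (mul_le_mul_of_nonneg_left ((hgb' n x hx).trans (le_abs_self _)) (abs_nonneg _))
    · filter_upwards [Measure.ae_ne volume (0 : E3)] with x hx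
      have h1 : Tendsto (fun n => g n x) atTop (nhds (f x)) := by
        simpa only [mul_one] using (tendsto_reg hx).const_mul (f x)
      have h2 : Tendsto (fun n => pd k (g n) x) atTop (nhds (pd k f x)) := by
        have := ((tendsto_reg hx).const_mul (pd k f x)).add
          ((tendsto_pd_reg k hx).const_mul (f x))
        simp only [mul_one, mul_zero, add_zero] at this
        exact this.congr fun n => (hpg n x hx).symm
      exact (h1.const_mul _).add (h2.const_mul _)
  simp only [hzero] at hlim
  exact (tendsto_nhds_unique hlim tendsto_const_nhds)

/-! ### Integrals of radial derivatives -/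

/-- For `m` homogeneous of degree zero, `∫ m ∂_r g |x|⁻² dx = -g(0) ∫_{S²} m dσ`: in polar
coordinates the weight `|x|⁻²` cancels the Jacobian, and the fundamental theorem of calculus applies
on each ray. -/
theorem radial_integral {g m : E3 → ℝ} {M : ℝ} (hg : Tst g) (hm : Measurable m)
    (hM : ∀ x, |m x| ≤ M) (hhom : ∀ (r : ℝ) (x : E3), 0 < r → m (r • x) = m x) :
    Integrable (fun x => ∑ k, pd k g x * (m x * x k / ‖x‖ ^ 3)) ∧
    ∫ x, ∑ k, pd k g x * (m x * x k / ‖x‖ ^ 3) =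
      -g 0 * ∫ w, m w ∂(volume : Measure E3).toSphere := by
  have hM0 : 0 ≤ M := (abs_nonneg _).trans (hM 0)
  have hint : Integrable (fun x => ∑ k, pd k g x * (m x * x k / ‖x‖ ^ 3)) := by
    refine integrable_finsetSum _ fun k _ => (hg.pd k).integrable_mul ?_
    refine locallyIntegrable_of_bound (C := M) 2 le_rfl (by fun_prop) fun x hx => ?_
    have hr : 0 < ‖x‖ := norm_pos_iff.2 hx
    rw [abs_div, abs_mul, abs_of_nonneg (by positivity : 0 ≤ ‖x‖ ^ 3)]
    calc |m x| * |x k| / ‖x‖ ^ 3 ≤ M * ‖x‖ / ‖x‖ ^ 3 := by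
          gcongr
          · exact hM x
          · exact abs_coord_le x k
      _ = M * (‖x‖⁻¹) ^ 2 := by field_simp
  refine ⟨hint, ?_⟩
  rw [polar _ hint, ← integral_const_mul]
  refine integral_congr_ae (.of_forall fun w => ?_)
  have hw : ‖(w : E3)‖ = 1 := by simp
  have hw0 : (w : E3) ≠ 0 := by rw [← norm_ne_zero_iff, hw]; norm_num
  have hsum : ∀ x : E3, ∑ k, pd k g x * (w : E3) k = fderiv ℝ g x w := by
    intro x
    have : (w : E3) = ∑ k, (w : E3) k • EuclideanSpace.single k (1 : ℝ) := by
      ext j; simp [Fin.sum_univ_three]; fin_cases j <;> simp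
    conv_rhs => rw [this]
    simp only [map_sum, map_smul, pd, smul_eq_mul, mul_comm]
  have hder : ∀ r : ℝ, HasDerivAt (fun r : ℝ => g (r • (w : E3)))
      (fderiv ℝ g (r • (w : E3)) w) r := by
    intro r
    have h1 : HasDerivAt (fun r : ℝ => r • (w : E3)) (w : E3) r := by
      simpa using (hasDerivAt_id r).smul_const (w : E3)
    exact (hg.differentiable _).hasFDerivAt.comp_hasDerivAt r h1
  have h1 : ∀ r ∈ Set.Ioi (0 : ℝ), r ^ 2 * (∑ k, pd k g (r • (w : E3)) *
      (m (r • (w : E3)) * (r • (w : E3)) k / ‖r • (w : E3)‖ ^ 3)) =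
      m w * deriv (fun r : ℝ => g (r • (w : E3))) r := by
    intro r hr
    have hr0 : 0 < r := hr
    rw [(hder r).deriv, ← hsum, Finset.mul_sum, Finset.mul_sum]
    refine Finset.sum_congr rfl fun k _ => ?_
    rw [hhom r _ hr0, norm_smul, hw, Real.norm_of_nonneg hr0.le]
    simp only [PiLp.smul_apply, smul_eq_mul]
    field_simp
  simp only
  rw [setIntegral_congr_fun measurableSet_Ioi h1, integral_const_mul]
  have hc : HasCompactSupport (fun r : ℝ => g (r • (w : E3))) :=
    hg.2.comp_isClosedEmbedding (isClosedEmbedding_smul_left hw0)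
  have hcd : ContDiff ℝ 1 (fun r : ℝ => g (r • (w : E3))) :=
    (hg.1.of_le (by simp)).comp (by fun_prop)
  rw [hc.integral_Ioi_deriv_eq hcd 0]
  simp; ring

/-! ### The fundamental matrix -/

theorem hasDerivAt_norm_line {x : E3} (hx : x ≠ 0) (k : Fin 3) :
    HasDerivAt (fun t : ℝ => ‖x + t • (EuclideanSpace.single k 1 : E3)‖) (x k / ‖x‖) 0 := by
  have hr : ‖x‖ ≠ 0 := norm_ne_zero_iff.2 hx
  have hl : HasDerivAt (fun t : ℝ => x + t • (EuclideanSpace.single k 1 : E3))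
      (EuclideanSpace.single k 1) 0 := by
    simpa using ((hasDerivAt_id (0 : ℝ)).smul_const (EuclideanSpace.single k 1 : E3)).const_add x
  have hs := hl.norm_sq
  have hs' := hs.sqrt (by simpa using hx)
  simp only [Real.sqrt_sq (norm_nonneg _)] at hs'
  convert! hs' using 1
  simp [EuclideanSpace.inner_single_right]
  field_simp

theorem differentiableAt_Phi (α : ℝ) (i j : Fin 3) {x : E3} (hx : x ≠ 0) :
    DifferentiableAt ℝ (fun z => Phi α z i j) x := by
  have hr : ‖x‖ ≠ 0 := norm_ne_zero_iff.2 hx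
  have hn : DifferentiableAt ℝ (fun z : E3 => ‖z‖) x := differentiableAt_id.norm ℝ hx
  unfold Phi
  have h1 : DifferentiableAt ℝ (fun z : E3 => ‖z‖⁻¹) x := hn.inv hr
  have h2 : DifferentiableAt ℝ (fun z : E3 => (α / (α + 2)) * (z i * z j)) x := by fun_prop
  have h3 : DifferentiableAt ℝ (fun z : E3 => ‖z‖ ^ 2) x := hn.pow 2
  have h4 : DifferentiableAt ℝ (fun z : E3 => (α / (α + 2)) * (z i * z j) / ‖z‖ ^ 2) x := by
    have := h2.mul (h3.inv (pow_ne_zero 2 hr))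
    exact this.congr_of_eventuallyEq (.of_forall fun z => div_eq_mul_inv _ _)
  exact (h1.const_mul (cA α)).mul (h4.const_add _)

theorem pd_Phi (α : ℝ) (i j k : Fin 3) {x : E3} (hx : x ≠ 0) :
    pd k (fun z => Phi α z i j) x = cA α * (1 / ‖x‖ ^ 3) *
      (-((if i = j then 1 else 0) * x k) + (α / (α + 2)) *
        ((if i = k then 1 else 0) * x j + (if j = k then 1 else 0) * x i)
        - 3 * (α / (α + 2)) * (x i * x j * x k) * (1 / ‖x‖ ^ 2)) := by
  have hr : ‖x‖ ≠ 0 := norm_ne_zero_iff.2 hx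
  have hN := hasDerivAt_norm_line hx k
  have hc : ∀ a : Fin 3, HasDerivAt (fun t : ℝ => (x + t • (EuclideanSpace.single k 1 : E3)) a)
      (if a = k then 1 else 0) 0 := by
    intro a
    have := ((hasDerivAt_id (0 : ℝ)).mul_const (if a = k then (1 : ℝ) else 0)).const_add (x a)
    simpa [PiLp.single_apply] using this
  have h0 : ‖x + (0 : ℝ) • (EuclideanSpace.single k 1 : E3)‖ ≠ 0 := by simpa using hx
  have hP := ((hN.inv h0).const_mul (cA α)).mul
    (((((hc i).mul (hc j)).const_mul (α / (α + 2))).div (hN.pow 2) (pow_ne_zero 2 h0)).const_add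
      (if i = j then (1 : ℝ) else 0))
  have hfd := (differentiableAt_Phi α i j hx).lineDeriv_eq_fderiv
    (v := (EuclideanSpace.single k 1 : E3))
  rw [pd, ← hfd, lineDeriv]
  refine hP.deriv.trans ?_
  simp
  field_simp
  split_ifs <;> ring

theorem abs_delta_le (i j : Fin 3) : |(if i = j then (1 : ℝ) else 0)| ≤ 1 := by
  split_ifs <;> simp

/-- A common constant in the bounds for `Φ` and its first derivatives. -/
def bdC (α : ℝ) : ℝ := |cA α| * (1 + 5 * |α / (α + 2)|)

theorem abs_Phi_le (α : ℝ) (i j : Fin 3) {x : E3} (hx : x ≠ 0) :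
    |Phi α x i j| ≤ bdC α * ‖x‖⁻¹ := by
  have hr : 0 < ‖x‖ := norm_pos_iff.2 hx
  have hi := abs_coord_le x i
  have hj := abs_coord_le x j
  rw [Phi, abs_mul, abs_mul, abs_inv, abs_norm, bdC]
  have h1 : |(if i = j then (1 : ℝ) else 0) + (α / (α + 2)) * (x i * x j) / ‖x‖ ^ 2| ≤
      1 + 5 * |α / (α + 2)| := by
    refine (abs_add_le _ _).trans (add_le_add (abs_delta_le i j) ?_)
    rw [abs_div, abs_mul, abs_mul, abs_of_pos (by positivity : 0 < ‖x‖ ^ 2),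
      div_le_iff₀ (by positivity)]
    have : |x i| * |x j| ≤ ‖x‖ * ‖x‖ := by gcongr
    nlinarith [abs_nonneg (α / (α + 2)), mul_le_mul_of_nonneg_left this (abs_nonneg (α / (α + 2))),
      mul_nonneg (abs_nonneg (α / (α + 2))) (sq_nonneg ‖x‖)]
  calc _ ≤ |cA α| * ‖x‖⁻¹ * (1 + 5 * |α / (α + 2)|) := by gcongr
    _ = _ := by ring

theorem abs_pd_Phi_le (α : ℝ) (i j k : Fin 3) {x : E3} (hx : x ≠ 0) :
    |pd k (fun z => Phi α z i j) x| ≤ bdC α * (‖x‖⁻¹) ^ 2 := by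
  have hr : 0 < ‖x‖ := norm_pos_iff.2 hx
  have hi := abs_coord_le x i
  have hj := abs_coord_le x j
  have hk := abs_coord_le x k
  rw [pd_Phi α i j k hx, abs_mul, abs_mul, abs_of_pos (by positivity : 0 < 1 / ‖x‖ ^ 3), bdC]
  set b := α / (α + 2)
  have h1 : |(if i = j then (1 : ℝ) else 0) * x k| ≤ 1 * ‖x‖ := by
    rw [abs_mul]; gcongr; exact abs_delta_le i j
  have h2 : |(if i = k then (1 : ℝ) else 0) * x j| ≤ 1 * ‖x‖ := by
    rw [abs_mul]; gcongr; exact abs_delta_le i k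
  have h3 : |(if j = k then (1 : ℝ) else 0) * x i| ≤ 1 * ‖x‖ := by
    rw [abs_mul]; gcongr; exact abs_delta_le j k
  have h4 : |3 * b * (x i * x j * x k) * (1 / ‖x‖ ^ 2)| ≤ 3 * |b| * ‖x‖ := by
    rw [abs_mul, abs_mul, abs_mul, abs_mul, abs_mul,
      abs_of_pos (by positivity : 0 < 1 / ‖x‖ ^ 2)]
    calc |3| * |b| * (|x i| * |x j| * |x k|) * (1 / ‖x‖ ^ 2)
        ≤ |3| * |b| * (‖x‖ * ‖x‖ * ‖x‖) * (1 / ‖x‖ ^ 2) := by gcongr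
      _ = 3 * |b| * ‖x‖ := by norm_num; field_simp
  have h5 : |b * ((if i = k then (1 : ℝ) else 0) * x j + (if j = k then (1 : ℝ) else 0) * x i)| ≤
      |b| * (2 * ‖x‖) := by
    rw [abs_mul]
    gcongr
    exact (abs_add_le _ _).trans (by linarith)
  have h6 : |-((if i = j then (1 : ℝ) else 0) * x k) +
      b * ((if i = k then (1 : ℝ) else 0) * x j + (if j = k then (1 : ℝ) else 0) * x i)
      - 3 * b * (x i * x j * x k) * (1 / ‖x‖ ^ 2)| ≤ (1 + 5 * |b|) * ‖x‖ := by
    refine (abs_sub _ _).trans ?_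
    refine (add_le_add (abs_add_le _ _) le_rfl).trans ?_
    rw [abs_neg]
    linarith
  calc _ ≤ |cA α| * (1 / ‖x‖ ^ 3) * ((1 + 5 * |b|) * ‖x‖) := by gcongr
    _ = _ := by field_simp

theorem measurable_Phi (α : ℝ) (i j : Fin 3) : Measurable (fun z => Phi α z i j) := by
  unfold Phi; fun_prop

theorem locallyIntegrable_Phi (α : ℝ) (i j : Fin 3) :
    LocallyIntegrable (fun z => Phi α z i j) :=
  locallyIntegrable_of_bound 1 (by norm_num) (measurable_Phi α i j)
    (fun x hx => by simpa using abs_Phi_le α i j hx)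

theorem locallyIntegrable_pd_Phi (α : ℝ) (i j k : Fin 3) :
    LocallyIntegrable (pd k (fun z => Phi α z i j)) :=
  locallyIntegrable_of_bound 2 le_rfl (measurable_pd k _)
    (fun _ hx => abs_pd_Phi_le α i j k hx)

theorem integral_pd_mul_Phi (α : ℝ) (i j k : Fin 3) {φ : E3 → ℝ} (hφ : Tst φ) :
    ∫ x, (pd k φ x * Phi α x i j + φ x * pd k (fun z => Phi α z i j) x) = 0 :=
  singular_ibp k hφ (fun _ hx => differentiableAt_Phi α i j hx)
    (fun _ hx => abs_Phi_le α i j hx) (fun _ hx => abs_pd_Phi_le α i j k hx)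

/-! ### Pointwise identities -/

/-- The pointwise product-rule identity behind the two integrations by parts. Here `D i k` stands
for `∂ₖuᵢ`, `DD i k` for `∂ₖ∂ₖuᵢ`, `G i` for `∂ᵢ div u`, `F` for `Φ` and `dF k i j` for `∂ₖΦᵢⱼ`; the
last bracket is what remains besides the divergences and the integrands of `B(u,u)`. -/
theorem alg1 (α : ℝ) (u G : Fin 3 → ℝ) (D DD F : Fin 3 → Fin 3 → ℝ)
    (dF : Fin 3 → Fin 3 → Fin 3 → ℝ) :
    ∑ i, ∑ j, (-(∑ k, DD i k) - α * G i) * F i j * u j =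
      -(∑ i, ∑ j, ∑ k, ((DD i k * u j + D i k * D j k) * F i j + (D i k * u j) * dF k i j))
      - α * (∑ i, ∑ j, ((G i * u j + (∑ k, D k k) * D j i) * F i j
          + ((∑ k, D k k) * u j) * dF i i j))
      + (∑ i, ∑ j, ∑ k, (D i k * D j k + α * D k k * D j i) * F i j)
      + (α / 2) * (∑ i, ∑ j, ∑ k, (u j * D k k - u k * D j k) * dF i i j)
      + ((∑ i, ∑ j, ∑ k, D i k * u j * dF k i j) +
        (α / 2) * ∑ j, (∑ k, (u j * D k k + u k * D j k)) * ∑ i, dF i i j) := by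
  simp only [Fin.sum_univ_three]
  ring

/-- The remainder in `alg1` only involves the radial derivative of `uᵢuⱼ`: the non-radial parts of
`∂ₖΦᵢⱼ` cancel against `∂ᵢΦᵢⱼ = -c(1-b)xⱼ/|x|³`, since `α(1-b) = 2b` for `b = α/(α+2)`. Here `q` and
`s` stand for `|x|⁻³` and `|x|⁻²`. -/
theorem alg2 (α b c q s : ℝ) (hb : α * (1 - b) = 2 * b) (u x : Fin 3 → ℝ) (D : Fin 3 → Fin 3 → ℝ)
    (hs : s * (∑ k, x k * x k) = 1) (dF : Fin 3 → Fin 3 → Fin 3 → ℝ)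
    (hdF : ∀ k i j, dF k i j = c * q * (-((if i = j then 1 else 0) * x k) +
      b * ((if i = k then 1 else 0) * x j + (if j = k then 1 else 0) * x i)
        - 3 * b * (x i * x j * x k) * s)) :
    (∑ i, ∑ j, ∑ k, D i k * u j * dF k i j) +
        (α / 2) * ∑ j, (∑ k, (u j * D k k + u k * D j k)) * ∑ i, dF i i j =
    -(c / 2) * ∑ i, ∑ j, ∑ k, (D i k * u j + u i * D j k) *
      (((if i = j then 1 else 0) + 3 * b * (x i * x j) * s) * x k * q) := by
  have hdiv : ∀ j, ∑ i, dF i i j = -(c * q * (1 - b)) * x j := by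
    intro j
    rw [Fin.sum_univ_three] at hs
    simp only [hdF, Fin.sum_univ_three]
    fin_cases j <;> simp
    · linear_combination (-(3 * b * c * q) * x 0) * hs
    · linear_combination (-(3 * b * c * q) * x 1) * hs
    · linear_combination (-(3 * b * c * q) * x 2) * hs
  have h2 : (α / 2) * ∑ j, (∑ k, (u j * D k k + u k * D j k)) * ∑ i, dF i i j =
      -(c * q * b) * ∑ j, (∑ k, (u j * D k k + u k * D j k)) * x j := by
    simp only [hdiv, Finset.mul_sum]
    refine Finset.sum_congr rfl fun j _ => ?_
    linear_combination (-(c * q) / 2 * (∑ k, (u j * D k k + u k * D j k)) * x j) * hb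
  rw [h2]
  simp only [hdF, Fin.sum_univ_three]
  simp
  ring

/-! ### The radial remainder and the energy identity -/

/-- The angular weight `δ_ij + 3β xᵢxⱼ/|x|²`, `β = α/(α+2)`. -/
def wgt (α : ℝ) (i j : Fin 3) (x : E3) : ℝ :=
  (if i = j then 1 else 0) + 3 * (α / (α + 2)) * (x i * x j) * (1 / ‖x‖ ^ 2)

theorem measurable_wgt (α : ℝ) (i j : Fin 3) : Measurable (wgt α i j) := by
  unfold wgt; fun_prop

theorem abs_wgt_le (α : ℝ) (i j : Fin 3) (x : E3) :
    |wgt α i j x| ≤ 1 + 3 * |α / (α + 2)| := by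
  refine (abs_add_le _ _).trans (add_le_add (abs_delta_le i j) ?_)
  by_cases hx : x = 0
  · subst hx; simp
  have hr : 0 < ‖x‖ := norm_pos_iff.2 hx
  have hi := abs_coord_le x i
  have hj := abs_coord_le x j
  rw [abs_mul, abs_mul, abs_mul, abs_mul, abs_of_pos (by positivity : 0 < 1 / ‖x‖ ^ 2)]
  calc |3| * |α / (α + 2)| * (|x i| * |x j|) * (1 / ‖x‖ ^ 2)
      ≤ |3| * |α / (α + 2)| * (‖x‖ * ‖x‖) * (1 / ‖x‖ ^ 2) := by gcongr
    _ = 3 * |α / (α + 2)| := by norm_num; field_simp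

theorem wgt_smul (α : ℝ) (i j : Fin 3) (r : ℝ) (x : E3) (hr : 0 < r) :
    wgt α i j (r • x) = wgt α i j x := by
  by_cases hx : x = 0
  · subst hx; simp
  have hx' : ‖x‖ ≠ 0 := norm_ne_zero_iff.2 hx
  simp only [wgt, norm_smul, Real.norm_of_nonneg hr.le, PiLp.smul_apply, smul_eq_mul]
  field_simp

theorem sphere_integral_wgt (α : ℝ) (i j : Fin 3) :
    ∫ w, wgt α i j w ∂(volume : Measure E3).toSphere =
      if i = j then 4 * π * (1 + α / (α + 2)) else 0 := by
  have h : ∀ w : sphere (0 : E3) 1, wgt α i j w =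
      (if i = j then 1 else 0) + 3 * (α / (α + 2)) * ((w : E3) i * (w : E3) j) := by
    intro w
    have hw : ‖(w : E3)‖ = 1 := by simp
    simp [wgt, hw]
  have hint : Integrable (fun w : sphere (0 : E3) 1 => (w : E3) i * (w : E3) j)
      (volume : Measure E3).toSphere := by
    have : Continuous fun w : sphere (0 : E3) 1 => (w : E3) i * (w : E3) j := by fun_prop
    exact this.integrable_of_hasCompactSupport (HasCompactSupport.of_compactSpace _)
  simp only [h]
  rw [integral_add (integrable_const _) (hint.const_mul _), integral_const, integral_const_mul,
    sphere_moment, sphere_area]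
  split_ifs
  · simp; ring
  · simp

/-- The radial remainder integrates to `|u(0)|²/2`, since `4π c_α (1 + α/(α+2)) = 1`. -/
theorem integral_residual {α : ℝ} (hα : -1 < α) {u : Fin 3 → E3 → ℝ} (hu : ∀ i, Tst (u i)) :
    Integrable (fun x => ∑ i, ∑ j, ∑ k, pd k (fun y => u i y * u j y) x *
      (wgt α i j x * x k / ‖x‖ ^ 3)) ∧
    -(cA α / 2) * ∫ x, ∑ i, ∑ j, ∑ k, pd k (fun y => u i y * u j y) x *
      (wgt α i j x * x k / ‖x‖ ^ 3) = (1 / 2) * ∑ i, (u i 0) ^ 2 := by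
  have hR := fun i j => radial_integral ((hu i).mul (hu j)) (measurable_wgt α i j)
    (abs_wgt_le α i j) (wgt_smul α i j)
  refine ⟨integrable_finsetSum _ fun i _ => integrable_finsetSum _ fun j _ => (hR i j).1, ?_⟩
  rw [integral_finsetSum _ fun i _ => integrable_finsetSum _ fun j _ => (hR i j).1]
  have : ∀ i, ∫ x, ∑ j, ∑ k, pd k (fun y => u i y * u j y) x * (wgt α i j x * x k / ‖x‖ ^ 3) =
      -(4 * π * (1 + α / (α + 2))) * (u i 0) ^ 2 := by
    intro i
    rw [integral_finsetSum _ fun j _ => (hR i j).1]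
    simp only [fun j => (hR i j).2, sphere_integral_wgt]
    simp
    ring
  simp only [this]
  rw [← Finset.mul_sum]
  have h1 : α + 1 ≠ 0 := by linarith
  have h2 : α + 2 ≠ 0 := by linarith
  rw [← mul_assoc]
  congr 1
  unfold cA
  field_simp
  ring

theorem integral_sum3_eq_zero {f : Fin 3 → E3 → ℝ} (hf : ∀ i, Integrable (f i))
    (h0 : ∀ i, ∫ x, f i x = 0) : ∫ x, ∑ i, f i x = 0 := by
  rw [integral_finsetSum _ fun i _ => hf i]
  simp [h0]

/-- `∫ (Lu)·(Φu) dx = (1/2)|u(0)|² + B(u,u)` for test fields `u`. -/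
theorem lame_energy_eq_half_sq_add_bilinear
    (α : ℝ) (hα : -1 < α)
    (u : E3 → Fin 3 → ℝ) (hu : IsTestOn Set.univ u) :
    ∫ x : E3, ∑ i, ∑ j, lame α u x i * Phi α x i j * u x j =
      (1 / 2) * (∑ i, (u 0 i) ^ 2) +
      ((α / 2) * ∫ x : E3, ∑ i, ∑ j, ∑ k,
          (u x j * pd k (fun z => u z k) x - u x k * pd k (fun z => u z j) x) *
            pd i (fun z => Phi α z i j) x) +
      (∫ x : E3, ∑ i, ∑ j, ∑ k,
          (pd k (fun z => u z i) x * pd k (fun z => u z j) x +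
            α * pd k (fun z => u z k) x * pd i (fun z => u z j) x) * Phi α x i j) := by
  have hT : ∀ i, Tst (fun y => u y i) := fun i =>
    ⟨contDiff_pi.1 hu.1 i, hu.2.1.comp_left (g := fun v : Fin 3 → ℝ => v i) rfl⟩
  have hdiv : Tst (divg u) := Tst.sum fun k => (hT k).pd k
  have hF := locallyIntegrable_Phi α
  have hdF := locallyIntegrable_pd_Phi α
  have hIP : ∀ (φ : E3 → ℝ) i j k, Tst φ → Integrable (fun x =>
      pd k φ x * Phi α x i j + φ x * pd k (fun z => Phi α z i j) x) := fun φ i j k hφ =>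
    ((hφ.pd k).integrable_mul (hF i j)).add (hφ.integrable_mul (hdF i j k))
  -- `P` and `Q` are the divergences `∂ₖ(∂ₖuᵢ uⱼ Φᵢⱼ)` and `∂ᵢ(div u uⱼ Φᵢⱼ)`, expanded by one product
  -- rule; `R` is the radial remainder.
  set P : E3 → ℝ := fun x => ∑ i, ∑ j, ∑ k,
    (pd k (fun y => pd k (fun z => u z i) y * u y j) x * Phi α x i j +
      (pd k (fun z => u z i) x * u x j) * pd k (fun z => Phi α z i j) x) with hPdef
  set Q : E3 → ℝ := fun x => ∑ i, ∑ j,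
    (pd i (fun y => divg u y * u y j) x * Phi α x i j +
      (divg u x * u x j) * pd i (fun z => Phi α z i j) x) with hQdef
  set R : E3 → ℝ := fun x => ∑ i, ∑ j, ∑ k, pd k (fun y => u y i * u y j) x *
      (wgt α i j x * x k / ‖x‖ ^ 3) with hRdef
  set B₁ : E3 → ℝ := fun x => ∑ i, ∑ j, ∑ k,
          (u x j * pd k (fun z => u z k) x - u x k * pd k (fun z => u z j) x) *
            pd i (fun z => Phi α z i j) x with hB₁def
  set B₂ : E3 → ℝ := fun x => ∑ i, ∑ j, ∑ k,
          (pd k (fun z => u z i) x * pd k (fun z => u z j) x +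
            α * pd k (fun z => u z k) x * pd i (fun z => u z j) x) * Phi α x i j with hB₂def
  have hP3 : ∀ i j k, Tst (fun y => pd k (fun z => u z i) y * u y j) := fun i j k =>
    ((hT i).pd k).mul (hT j)
  have hQ2 : ∀ j, Tst (fun y => divg u y * u y j) := fun j => hdiv.mul (hT j)
  have hPi : Integrable P := integrable_finsetSum _ fun i _ => integrable_finsetSum _ fun j _ =>
    integrable_finsetSum _ fun k _ => hIP _ i j k (hP3 i j k)
  have hQi : Integrable Q := integrable_finsetSum _ fun i _ => integrable_finsetSum _ fun j _ =>
    hIP _ i j i (hQ2 j)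
  have hP0 : ∫ x, P x = 0 :=
    integral_sum3_eq_zero (fun i => integrable_finsetSum _ fun j _ =>
      integrable_finsetSum _ fun k _ => hIP _ i j k (hP3 i j k)) fun i =>
    integral_sum3_eq_zero (fun j => integrable_finsetSum _ fun k _ => hIP _ i j k (hP3 i j k))
      fun j => integral_sum3_eq_zero (fun k => hIP _ i j k (hP3 i j k))
      fun k => integral_pd_mul_Phi α i j k (hP3 i j k)
  have hQ0 : ∫ x, Q x = 0 :=
    integral_sum3_eq_zero (fun i => integrable_finsetSum _ fun j _ => hIP _ i j i (hQ2 j))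
      fun i => integral_sum3_eq_zero (fun j => hIP _ i j i (hQ2 j))
      fun j => integral_pd_mul_Phi α i j i (hQ2 j)
  have hB₁i : Integrable B₁ := by
    refine integrable_finsetSum _ fun i _ => integrable_finsetSum _ fun j _ =>
      integrable_finsetSum _ fun k _ => ?_
    have := (((hT j).mul ((hT k).pd k)).integrable_mul (hdF i j i)).sub
      (((hT k).mul ((hT j).pd k)).integrable_mul (hdF i j i))
    refine this.congr (.of_forall fun x => ?_)
    simp only [Pi.sub_apply]; ring
  have hB₂i : Integrable B₂ := by
    refine integrable_finsetSum _ fun i _ => integrable_finsetSum _ fun j _ =>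
      integrable_finsetSum _ fun k _ => ?_
    have := ((((hT i).pd k).mul ((hT j).pd k)).integrable_mul (hF i j)).add
      (((((hT k).pd k).mul ((hT j).pd i)).integrable_mul (hF i j)).const_mul α)
    refine this.congr (.of_forall fun x => ?_)
    simp only [Pi.add_apply]; ring
  obtain ⟨hRi, hR0⟩ := integral_residual hα hT
  have hαβ : α * (1 - α / (α + 2)) = 2 * (α / (α + 2)) := by
    have h2 : α + 2 ≠ 0 := by linarith
    field_simp; ring
  have hkey : ∀ x : E3, x ≠ 0 → ∑ i, ∑ j, lame α u x i * Phi α x i j * u x j =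
      -P x - α * Q x + B₂ x + (α / 2) * B₁ x + -(cA α / 2) * R x := by
    intro x hx
    have hr : ‖x‖ ≠ 0 := norm_ne_zero_iff.2 hx
    have a1 := alg1 α (u x) (fun i => pd i (divg u) x) (fun i k => pd k (fun z => u z i) x)
      (fun i k => pd k (pd k (fun z => u z i)) x) (Phi α x)
      (fun k i j => pd k (fun z => Phi α z i j) x)
    have a2 := alg2 α (α / (α + 2)) (cA α) (1 / ‖x‖ ^ 3) (1 / ‖x‖ ^ 2) hαβ (u x) x
      (fun i k => pd k (fun z => u z i) x)
      (by
        have : ∑ k, x k * x k = ‖x‖ ^ 2 := by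
          rw [EuclideanSpace.real_norm_sq_eq]; simp only [pow_two]
        rw [this]; field_simp)
      (fun k i j => pd k (fun z => Phi α z i j) x) (fun k i j => pd_Phi α i j k hx)
    rw [a2] at a1
    have e1 : ∀ i j k, pd k (fun y => pd k (fun z => u z i) y * u y j) x =
        pd k (pd k (fun z => u z i)) x * u x j +
          pd k (fun z => u z i) x * pd k (fun z => u z j) x := fun i j k =>
      pd_mul k (((hT i).pd k).differentiable x) ((hT j).differentiable x)
    have e2 : ∀ i j, pd i (fun y => divg u y * u y j) x =
        pd i (divg u) x * u x j + divg u x * pd i (fun z => u z j) x := fun i j =>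
      pd_mul i (hdiv.differentiable x) ((hT j).differentiable x)
    have e3 : ∀ i j k, pd k (fun y => u y i * u y j) x =
        pd k (fun z => u z i) x * u x j + u x i * pd k (fun z => u z j) x := fun i j k =>
      pd_mul k ((hT i).differentiable x) ((hT j).differentiable x)
    have e4 : R x = ∑ i, ∑ j, ∑ k, (pd k (fun z => u z i) x * u x j +
        u x i * pd k (fun z => u z j) x) *
      (((if i = j then 1 else 0) + 3 * (α / (α + 2)) * (x i * x j) * (1 / ‖x‖ ^ 2)) * x k *
        (1 / ‖x‖ ^ 3)) := by
      simp only [hRdef, e3, wgt, mul_one_div]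
    rw [e4]
    simp only [hPdef, hQdef, e1, e2]
    exact a1
  have hae : (fun x => ∑ i, ∑ j, lame α u x i * Phi α x i j * u x j) =ᵐ[volume]
      fun x => -P x - α * Q x + B₂ x + (α / 2) * B₁ x + -(cA α / 2) * R x := by
    filter_upwards [Measure.ae_ne volume (0 : E3)] with x hx using hkey x hx
  change Integrable R at hRi
  change -(cA α / 2) * ∫ x, R x = _ at hR0
  have i0 : Integrable fun x => -P x := hPi.neg
  have i1 : Integrable fun x => -P x - α * Q x := i0.sub (hQi.const_mul α)
  have i2 : Integrable fun x => -P x - α * Q x + B₂ x := i1.add hB₂i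
  have i3 : Integrable fun x => -P x - α * Q x + B₂ x + (α / 2) * B₁ x :=
    i2.add (hB₁i.const_mul _)
  rw [integral_congr_ae hae, integral_add i3 (hRi.const_mul _),
    integral_add i2 (hB₁i.const_mul _), integral_add i1 hB₂i,
    integral_sub i0 (hQi.const_mul α), integral_neg, integral_const_mul, integral_const_mul,
    integral_const_mul, hP0, hQ0, hR0]
  ring
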